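/- arXiv:math/9909139 — 3 statements merged into one kernel-verified Lean document; each statement's English description precedes it below -/
import Mathlib

section
/- Let m ≥ 1, n = 2m+1, and let a₁,…,aₙ be real numbers. Define G : (0,∞) → ℝ by G(t) = t^{2m−1} ∫_{S^{2m}} cos(tω₁a₁)·cos(tω₂a₂)⋯cos(tωₙaₙ) dσ(ω). Then G is (m times) differentiable and for every t > 0, cos(t·√(a₁²+⋯+aₙ²)) = (1/(2(2π)^m)) · (D^{m−1}G)′(t). -/
open MeasureTheory Real

/-- The operator `(Df)(t) = f'(t)/t` on real-valued functions. -/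
noncomputable def Dop (f : ℝ → ℝ) : ℝ → ℝ := fun t => deriv f t / t

/-- Polar coordinates for a function that splits into a spherical and a radial factor. -/
theorem integral_eq_toSphere_mul_of_smul {E : Type*} [NormedAddCommGroup E] [NormedSpace ℝ E]
    [FiniteDimensional ℝ E] [Nontrivial E] [MeasurableSpace E] [BorelSpace E]
    (μ : Measure E) [μ.IsAddHaarMeasure] (f g : E → ℝ) (h : ℝ → ℝ)
    (hf : ∀ r : ℝ, 0 < r → ∀ ω : E, ‖ω‖ = 1 → f (r • ω) = g ω * h r) :
    ∫ x, f x ∂μ = (∫ ω : Metric.sphere (0 : E) 1, g ω ∂μ.toSphere) *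
      ∫ r in Set.Ioi (0 : ℝ), r ^ (Module.finrank ℝ E - 1) * h r := by
  calc
    ∫ x, f x ∂μ = ∫ x : ({(0)}ᶜ : Set E), f x.1 ∂(μ.comap (↑)) := by
      rw [integral_subtype_comap (measurableSet_singleton _).compl fun x ↦ f x,
        restrict_compl_singleton]
    _ = ∫ x : Metric.sphere (0 : E) 1 × Set.Ioi (0 : ℝ), g x.1 * h x.2
          ∂μ.toSphere.prod (.volumeIoiPow (Module.finrank ℝ E - 1)) := by
      rw [← μ.measurePreserving_homeomorphUnitSphereProd.integral_comp
        (Homeomorph.measurableEmbedding _)]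
      refine integral_congr_ae (.of_forall fun x ↦ ?_)
      have hx : 0 < ‖(x : E)‖ := norm_pos_iff.2 x.2
      have key := hf ‖(x : E)‖ hx (‖(x : E)‖⁻¹ • (x : E)) (by
        rw [norm_smul, norm_inv, norm_norm, inv_mul_cancel₀ hx.ne'])
      rw [smul_inv_smul₀ hx.ne'] at key
      simpa using key
    _ = (∫ ω : Metric.sphere (0 : E) 1, g ω ∂μ.toSphere) *
          ∫ x : Set.Ioi (0 : ℝ), h x ∂.volumeIoiPow (Module.finrank ℝ E - 1) :=
      integral_prod_mul (fun ω : Metric.sphere (0 : E) 1 ↦ g ω) (fun r : Set.Ioi (0 : ℝ) ↦ h r)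
    _ = _ := by
      congr 1
      simp only [Measure.volumeIoiPow, ENNReal.ofReal]
      rw [integral_withDensity_eq_integral_smul,
        integral_subtype_comap measurableSet_Ioi
          fun a ↦ Real.toNNReal (a ^ (Module.finrank ℝ E - 1)) • h a,
        setIntegral_congr_fun measurableSet_Ioi fun x hx ↦ ?_]
      · rw [NNReal.smul_def, Real.coe_toNNReal _ (pow_nonneg hx.out.le _), smul_eq_mul]
      · exact (measurable_subtype_coe.pow_const _).real_toNNReal

theorem integral_Ioi_pow_mul_exp_neg_sq (k : ℕ) :
    ∫ r in Set.Ioi (0 : ℝ), r ^ k * exp (-r ^ 2) = Gamma ((k + 1) / 2) / 2 := by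
  have h := integral_rpow_mul_exp_neg_rpow (p := 2) (q := k) two_pos
    (by have : (0 : ℝ) ≤ k := k.cast_nonneg
        linarith)
  simp only [rpow_natCast, rpow_two] at h
  rw [h]
  ring

theorem integral_even_pow_mul_exp_neg_sq (j : ℕ) :
    ∫ x : ℝ, x ^ (2 * j) * exp (-x ^ 2) = Gamma (j + 1 / 2) := by
  have h := integral_comp_abs (f := fun x : ℝ ↦ x ^ (2 * j) * exp (-x ^ 2))
  simp only [sq_abs, pow_mul] at h ⊢
  simp only [← pow_mul] at h ⊢
  rw [h, integral_Ioi_pow_mul_exp_neg_sq]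
  push_cast
  rw [mul_div_cancel₀ _ two_ne_zero]
  congr 1
  ring

theorem integral_coord_pow_mul_exp_neg_norm_sq (n j : ℕ) :
    ∫ x : EuclideanSpace ℝ (Fin (n + 1)), x 0 ^ (2 * j) * exp (-‖x‖ ^ 2) =
      Gamma (j + 1 / 2) * √π ^ n := by
  rw [← (PiLp.volume_preserving_toLp (Fin (n + 1))).integral_comp
    (MeasurableEquiv.toLp 2 _).measurableEmbedding]
  have h (x : Fin (n + 1) → ℝ) :
      (WithLp.toLp 2 x) 0 ^ (2 * j) * exp (-‖WithLp.toLp 2 x‖ ^ 2) =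
        ∏ i, (fun (i : Fin (n + 1)) (y : ℝ) ↦
          (if i = 0 then y ^ (2 * j) else 1) * exp (-y ^ 2)) i (x i) := by
    rw [EuclideanSpace.real_norm_sq_eq, Finset.prod_mul_distrib, ← exp_sum,
      Finset.sum_neg_distrib]
    simp [Finset.prod_ite_eq']
  rw [integral_congr_ae (.of_forall h), integral_fintype_prod_volume_eq_prod
    (fun (i : Fin (n + 1)) (y : ℝ) ↦ (if i = 0 then y ^ (2 * j) else 1) * exp (-y ^ 2)),
    Fin.prod_univ_succ]
  have h1 : ∫ x : ℝ, exp (-x ^ 2) = √π := by simpa using integral_gaussian 1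
  simp [Fin.succ_ne_zero, h1, integral_even_pow_mul_exp_neg_sq]

theorem integral_inner_pow_mul_exp_neg_norm_sq (n j : ℕ) (b : EuclideanSpace ℝ (Fin (n + 1))) :
    ∫ x : EuclideanSpace ℝ (Fin (n + 1)), inner ℝ b x ^ (2 * j) * exp (-‖x‖ ^ 2) =
      ‖b‖ ^ (2 * j) * (Gamma (j + 1 / 2) * √π ^ n) := by
  set e : EuclideanSpace ℝ (Fin (n + 1)) := ‖b‖ • EuclideanSpace.single 0 1 with he
  set R := (Submodule.span ℝ {e - b})ᗮ.reflection
  have hRb : R e = b := Submodule.reflection_sub (by simp [he, norm_smul])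
  rw [← R.measurePreserving.integral_comp R.toHomeomorph.measurableEmbedding,
    ← integral_coord_pow_mul_exp_neg_norm_sq, ← integral_const_mul]
  refine integral_congr_ae (.of_forall fun x ↦ ?_)
  have : inner ℝ b (R x) = ‖b‖ * x 0 := by
    conv_lhs => rw [← hRb, R.inner_map_map, he, inner_smul_left, EuclideanSpace.inner_single_left]
    simp
  simp only [this, R.norm_map]
  ring

theorem Gamma_add_nat_eq_prod {s : ℝ} (hs : 0 < s) (m : ℕ) :
    Gamma (s + m) = Gamma s * ∏ i ∈ Finset.range m, (s + i) := by
  induction m with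
  | zero => simp
  | succ m ih =>
    rw [Finset.prod_range_succ, ← mul_assoc, ← ih, Nat.cast_succ, ← add_assoc,
      Gamma_add_one (by positivity), mul_comm]

/-- Even moments of a linear functional on an even-dimensional sphere. -/
theorem integral_sphere_inner_pow (m j : ℕ) (b : EuclideanSpace ℝ (Fin (2 * m + 1))) :
    ∫ ω : Metric.sphere (0 : EuclideanSpace ℝ (Fin (2 * m + 1))) 1,
        inner ℝ b (ω : EuclideanSpace ℝ (Fin (2 * m + 1))) ^ (2 * j)
        ∂((volume : Measure (EuclideanSpace ℝ (Fin (2 * m + 1)))).toSphere) =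
      2 * (2 * π) ^ m * (‖b‖ ^ (2 * j) / ∏ i ∈ Finset.range m, (2 * j + 2 * i + 1 : ℝ)) := by
  have hpolar := integral_eq_toSphere_mul_of_smul
    (volume : Measure (EuclideanSpace ℝ (Fin (2 * m + 1))))
    (fun x ↦ inner ℝ b x ^ (2 * j) * exp (-‖x‖ ^ 2)) (fun x ↦ inner ℝ b x ^ (2 * j))
    (fun r ↦ r ^ (2 * j) * exp (-r ^ 2)) (fun r hr ω hω ↦ by
      simp only [inner_smul_right, norm_smul, hω, mul_one, norm_eq_abs, sq_abs]
      ring)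
  rw [integral_inner_pow_mul_exp_neg_norm_sq, finrank_euclideanSpace_fin,
    Nat.add_sub_cancel] at hpolar
  simp_rw [← mul_assoc, ← pow_add] at hpolar
  rw [integral_Ioi_pow_mul_exp_neg_sq] at hpolar
  have hs : (0 : ℝ) < j + 1 / 2 := by positivity
  have hG : Gamma ((((2 * m + 2 * j : ℕ) : ℝ) + 1) / 2) =
      Gamma (j + 1 / 2) * ((∏ i ∈ Finset.range m, (2 * j + 2 * i + 1 : ℝ)) / 2 ^ m) := by
    have h2 : (2 : ℝ) ^ m = ∏ i ∈ Finset.range m, 2 := by simp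
    rw [h2, ← Finset.prod_div_distrib]
    convert Gamma_add_nat_eq_prod hs m using 2
    · push_cast
      ring
    · exact Finset.prod_congr rfl fun i _ ↦ by ring
  have hprod : 0 < ∏ i ∈ Finset.range m, (2 * j + 2 * i + 1 : ℝ) :=
    Finset.prod_pos fun i _ ↦ by positivity
  have hΓ := Gamma_pos_of_pos hs
  have hpi : √π ^ (2 * m) = π ^ m := by rw [pow_mul, sq_sqrt pi_pos.le]
  rw [hG, hpi] at hpolar
  rw [mul_pow, ← mul_div_assoc, eq_div_iff hprod.ne']
  refine mul_right_cancel₀ hΓ.ne' ?_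
  generalize (∏ i ∈ Finset.range m, (2 * j + 2 * i + 1 : ℝ)) = P at *
  field_simp at hpolar
  linear_combination -Gamma (j + 1 / 2) * hpolar

theorem hasSum_integral_sphere_cos_inner (m : ℕ) (b : EuclideanSpace ℝ (Fin (2 * m + 1)))
    (t : ℝ) :
    HasSum (fun j : ℕ ↦ 2 * (2 * π) ^ m * ((-1) ^ j * (t * ‖b‖) ^ (2 * j) / (2 * j).factorial /
        ∏ i ∈ Finset.range m, (2 * j + 2 * i + 1 : ℝ)))
      (∫ ω : Metric.sphere (0 : EuclideanSpace ℝ (Fin (2 * m + 1))) 1,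
        cos (t * inner ℝ b (ω : EuclideanSpace ℝ (Fin (2 * m + 1))))
        ∂((volume : Measure (EuclideanSpace ℝ (Fin (2 * m + 1)))).toSphere)) := by
  have h := hasSum_integral_of_dominated_convergence
    (μ := (volume : Measure (EuclideanSpace ℝ (Fin (2 * m + 1)))).toSphere)
    (F := fun (j : ℕ) ω ↦ (-1) ^ j *
      (t * inner ℝ b (ω : EuclideanSpace ℝ (Fin (2 * m + 1)))) ^ (2 * j) / (2 * j).factorial)
    (f := fun ω ↦ cos (t * inner ℝ b (ω : EuclideanSpace ℝ (Fin (2 * m + 1)))))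
    (fun j _ ↦ |(-1) ^ j * (t * ‖b‖) ^ (2 * j) / (2 * j).factorial|)
    (fun j ↦ Continuous.aestronglyMeasurable (by fun_prop))
    (fun j ↦ .of_forall fun ω ↦ ?_)
    (.of_forall fun _ ↦ (hasSum_cos (t * ‖b‖)).summable.abs)
    (integrable_const _)
    (.of_forall fun ω ↦ hasSum_cos _)
  · refine h.congr_fun fun j ↦ ?_
    simp_rw [mul_pow t, ← mul_assoc, mul_div_right_comm]
    rw [integral_const_mul, integral_sphere_inner_pow]
    ring
  · have hω : ‖(ω : EuclideanSpace ℝ (Fin (2 * m + 1)))‖ = 1 := by simp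
    have hi := abs_real_inner_le_norm b (ω : EuclideanSpace ℝ (Fin (2 * m + 1)))
    rw [hω, mul_one] at hi
    simp only [norm_eq_abs, abs_div, abs_mul, abs_pow, abs_norm]
    gcongr

theorem prod_cos_eq_sum {ι : Type*} [Fintype ι] [DecidableEq ι] (θ : ι → ℝ) :
    ∏ i, cos (θ i) =
      (1 / 2 ^ Fintype.card ι) * ∑ p : ι → Bool, cos (∑ i, bif p i then θ i else -θ i) := by
  have h (i : ι) : ((cos (θ i) : ℝ) : ℂ) =
      (1 / 2) * ∑ s : Bool, Complex.exp (((bif s then θ i else -θ i : ℝ) : ℂ) * Complex.I) := by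
    rw [Complex.ofReal_cos, Complex.cos, Fintype.sum_bool]
    simp only [cond_true, cond_false, Complex.ofReal_neg]
    ring
  have hc : ((∏ i, cos (θ i) : ℝ) : ℂ) = ((1 / 2 ^ Fintype.card ι : ℝ) : ℂ) *
      ∑ p : ι → Bool, Complex.exp (((∑ i, bif p i then θ i else -θ i : ℝ) : ℂ) * Complex.I) := by
    push_cast
    simp_rw [← Complex.ofReal_cos, h]
    rw [Finset.prod_mul_distrib, Fintype.prod_sum]
    simp [← Complex.exp_sum, Finset.sum_mul]
  have := congrArg Complex.re hc
  rw [Complex.ofReal_re, Complex.re_ofReal_mul, Complex.re_sum] at this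
  simpa only [Complex.exp_ofReal_mul_I_re] using this

theorem hasSum_integral_sphere_prod_cos (m : ℕ) (a : Fin (2 * m + 1) → ℝ) (t : ℝ) :
    HasSum (fun j : ℕ ↦ 2 * (2 * π) ^ m * ((-1) ^ j * (t * √(∑ i, a i ^ 2)) ^ (2 * j) /
        (2 * j).factorial / ∏ i ∈ Finset.range m, (2 * j + 2 * i + 1 : ℝ)))
      (∫ ω : Metric.sphere (0 : EuclideanSpace ℝ (Fin (2 * m + 1))) 1,
        ∏ i, cos (t * (ω : EuclideanSpace ℝ (Fin (2 * m + 1))) i * a i)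
        ∂((volume : Measure (EuclideanSpace ℝ (Fin (2 * m + 1)))).toSphere)) := by
  let b (p : Fin (2 * m + 1) → Bool) : EuclideanSpace ℝ (Fin (2 * m + 1)) :=
    WithLp.toLp 2 fun i ↦ bif p i then a i else -a i
  have hb (p) : ‖b p‖ = √(∑ i, a i ^ 2) := by
    rw [EuclideanSpace.norm_eq]
    congr 1
    refine Finset.sum_congr rfl fun i _ ↦ ?_
    cases hp : p i <;> simp [b, hp]
  have hcos (p) (ω : EuclideanSpace ℝ (Fin (2 * m + 1))) :
      (∑ i, bif p i then t * ω i * a i else -(t * ω i * a i)) = t * inner ℝ (b p) ω := by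
    rw [PiLp.inner_apply, Finset.mul_sum]
    refine Finset.sum_congr rfl fun i _ ↦ ?_
    cases hp : p i <;> simp [b, hp] <;> ring
  simp_rw [prod_cos_eq_sum, hcos]
  rw [integral_const_mul, integral_finsetSum _ fun p _ ↦
    (Continuous.integrable_of_hasCompactSupport (by fun_prop) (.of_compactSpace _))]
  have hs := (hasSum_sum fun p (_ : p ∈ Finset.univ) ↦
    hasSum_integral_sphere_cos_inner m (b p) t).mul_left
      (1 / 2 ^ Fintype.card (Fin (2 * m + 1)) : ℝ)
  simp_rw [hb, Finset.sum_const, Finset.card_univ, nsmul_eq_mul] at hs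
  refine hs.congr_fun fun j ↦ ?_
  rw [← mul_assoc (1 / _)]
  simp

theorem HasSum.intervalIntegral_pow {c : ℕ → ℝ} {p : ℕ} {f : ℝ → ℝ}
    (hf : ∀ t, HasSum (fun j ↦ c j * t ^ (2 * j + p)) (f t)) (t : ℝ) :
    HasSum (fun j : ℕ ↦ c j / (2 * j + p + 1) * t ^ (2 * j + p + 1)) (∫ s in 0..t, f s) := by
  have h := intervalIntegral.hasSum_integral_of_dominated_convergence (μ := volume)
    (a := 0) (b := t) (F := fun j s ↦ c j * s ^ (2 * j + p)) (f := f)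
    (fun j _ ↦ |c j * t ^ (2 * j + p)|)
    (fun j ↦ Continuous.aestronglyMeasurable (by fun_prop))
    (fun j ↦ .of_forall fun s hs ↦ ?_)
    (.of_forall fun _ _ ↦ (hf t).summable.abs)
    intervalIntegrable_const
    (.of_forall fun s _ ↦ hf s)
  · refine h.congr_fun fun j ↦ ?_
    rw [intervalIntegral.integral_const_mul, integral_pow]
    push_cast
    simp
    ring
  · simp only [norm_eq_abs, abs_mul, abs_pow]
    have : |s| ≤ |t| := by
      simpa using Set.abs_sub_left_of_mem_uIcc (Set.uIoc_subset_uIcc hs)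
    gcongr

/-- The iterated right inverse of `Dop`, started at the primitive of `s ↦ cos (r s)`. -/
noncomputable def iteratedPrimitive (r : ℝ) : ℕ → ℝ → ℝ
  | 0 => fun t ↦ ∫ s in 0..t, cos (s * r)
  | k + 1 => fun t ↦ ∫ s in 0..t, s * iteratedPrimitive r k s

theorem continuous_iteratedPrimitive (r : ℝ) (k : ℕ) : Continuous (iteratedPrimitive r k) := by
  cases k with
  | zero =>
    exact intervalIntegral.continuous_primitive
      (fun _ _ ↦ Continuous.intervalIntegrable (by fun_prop) _ _) 0
  | succ k =>
    have := continuous_iteratedPrimitive r k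
    exact intervalIntegral.continuous_primitive
      (fun _ _ ↦ Continuous.intervalIntegrable (by fun_prop) _ _) 0

theorem hasDerivAt_iteratedPrimitive_zero (r t : ℝ) :
    HasDerivAt (iteratedPrimitive r 0) (cos (t * r)) t :=
  (Continuous.integral_hasStrictDerivAt (f := fun s ↦ cos (s * r)) (by fun_prop) 0 t).hasDerivAt

theorem hasDerivAt_iteratedPrimitive_succ (r : ℝ) (k : ℕ) (t : ℝ) :
    HasDerivAt (iteratedPrimitive r (k + 1)) (t * iteratedPrimitive r k t) t := by
  have := continuous_iteratedPrimitive r k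
  have hc : Continuous fun s ↦ s * iteratedPrimitive r k s := by fun_prop
  exact hc.integral_hasStrictDerivAt 0 t |>.hasDerivAt

theorem hasSum_iteratedPrimitive (r : ℝ) (k : ℕ) (t : ℝ) :
    HasSum (fun j : ℕ ↦ (-1) ^ j * r ^ (2 * j) / (2 * j).factorial /
        (∏ i ∈ Finset.range (k + 1), (2 * j + 2 * i + 1 : ℝ)) * t ^ (2 * j + (2 * k + 1)))
      (iteratedPrimitive r k t) := by
  induction k generalizing t with
  | zero =>
    refine (HasSum.intervalIntegral_pow (p := 0)
      (c := fun j ↦ (-1) ^ j * r ^ (2 * j) / (2 * j).factorial) (fun s ↦ ?_) t).congr_fun ?_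
    · convert hasSum_cos (s * r) using 2 with j
      rw [mul_pow]
      ring
    · intro j
      simp
  | succ k ih =>
    have h := HasSum.intervalIntegral_pow (p := 2 * k + 2) (f := fun s ↦ s * iteratedPrimitive r k s)
      (c := fun j ↦ (-1) ^ j * r ^ (2 * j) / (2 * j).factorial /
        (∏ i ∈ Finset.range (k + 1), (2 * j + 2 * i + 1 : ℝ))) (fun s ↦ ?_) t
    · refine h.congr_fun fun j ↦ ?_
      rw [Finset.prod_range_succ _ (k + 1), ← div_div]
      push_cast
      ring_nf
    · refine ((ih s).mul_left s).congr_fun fun j ↦ ?_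
      ring

theorem Dop_eqOn {F : ℝ → ℝ} {C r : ℝ} {k : ℕ}
    (hF : ∀ t ∈ Set.Ioi (0 : ℝ), F t = C * iteratedPrimitive r (k + 1) t) :
    ∀ t ∈ Set.Ioi (0 : ℝ), Dop F t = C * iteratedPrimitive r k t := by
  intro t ht
  have he : F =ᶠ[nhds t] fun s ↦ C * iteratedPrimitive r (k + 1) s :=
    Filter.eventually_of_mem (Ioi_mem_nhds ht) hF
  have ht0 : t ≠ 0 := ne_of_gt ht
  rw [Dop, he.deriv_eq, ((hasDerivAt_iteratedPrimitive_succ r k t).const_mul C).deriv]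
  field_simp

theorem iterate_Dop_eqOn {G : ℝ → ℝ} {C r : ℝ} {k l : ℕ}
    (hG : ∀ t ∈ Set.Ioi (0 : ℝ), G t = C * iteratedPrimitive r (k + l) t) :
    ∀ t ∈ Set.Ioi (0 : ℝ), Dop^[k] G t = C * iteratedPrimitive r l t := by
  induction k generalizing l with
  | zero => simpa using hG
  | succ k ih =>
    rw [Function.iterate_succ']
    exact Dop_eqOn (ih (l := l + 1) (by simpa only [Nat.succ_add_eq_add_succ] using hG))

theorem stmt0 (m : ℕ) (hm : 1 ≤ m) (a : Fin (2*m+1) → ℝ)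
    (G : ℝ → ℝ)
    (hG : ∀ t : ℝ, G t = t ^ (2*m-1) *
      ∫ ω : Metric.sphere (0 : EuclideanSpace ℝ (Fin (2*m+1))) 1,
        ∏ i, Real.cos (t * (ω : EuclideanSpace ℝ (Fin (2*m+1))) i * a i)
        ∂((volume : Measure (EuclideanSpace ℝ (Fin (2*m+1)))).toSphere)) :
    (∀ k < m, ∀ t ∈ Set.Ioi (0:ℝ), DifferentiableAt ℝ (Dop^[k] G) t) ∧
    ∀ t ∈ Set.Ioi (0:ℝ),
      Real.cos (t * Real.sqrt (∑ i, (a i)^2)) =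
        (1 / (2 * (2*π)^m)) * deriv (Dop^[m-1] G) t := by
  set r := √(∑ i, a i ^ 2)
  set C : ℝ := 2 * (2 * π) ^ m
  have hG' (t : ℝ) : G t = C * iteratedPrimitive r (m - 1) t := by
    rw [hG]
    refine ((hasSum_integral_sphere_prod_cos m a t).mul_left _).unique ?_
    convert (hasSum_iteratedPrimitive r (m - 1) t).mul_left C using 2 with j
    rw [Nat.sub_add_cancel hm, show 2 * (m - 1) + 1 = 2 * m - 1 by lia, pow_add, mul_pow]
    ring
  have hev (k : ℕ) (hk : k < m) (t : ℝ) (ht : t ∈ Set.Ioi (0 : ℝ)) :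
      Dop^[k] G =ᶠ[nhds t] fun s ↦ C * iteratedPrimitive r (m - 1 - k) s :=
    Filter.eventually_of_mem (Ioi_mem_nhds ht) (iterate_Dop_eqOn fun s _ ↦ by
      rw [hG', Nat.add_sub_cancel' (by lia)])
  refine ⟨fun k hk t ht ↦ (hev k hk t ht).differentiableAt_iff.2 ?_, fun t ht ↦ ?_⟩
  · cases m - 1 - k with
    | zero => exact ((hasDerivAt_iteratedPrimitive_zero r t).const_mul C).differentiableAt
    | succ l => exact ((hasDerivAt_iteratedPrimitive_succ r l t).const_mul C).differentiableAt
  · rw [(hev (m - 1) (by lia) t ht).deriv_eq, Nat.sub_self,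
      ((hasDerivAt_iteratedPrimitive_zero r t).const_mul C).deriv]
    have : C ≠ 0 := by positivity
    field_simp
end

section
/- Let m ≥ 1, n = 2m, and let a₁,…,aₙ be real numbers. Define G : (0,∞) → ℝ by G(t) = t^{2m−1} ∫_{‖ω‖≤1, ω∈ℝ^{2m}} cos(tω₁a₁)·cos(tω₂a₂)⋯cos(tω_{2m}a_{2m}) · (1−‖ω‖²)^{−1/2} dω. Then G is (m times) differentiable and for every t > 0, cos(t·√(a₁²+⋯+a_{2m}²)) = (1/(2π)^m) · (D^{m−1}G)′(t). -/
open MeasureTheory Real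

theorem betaPDFReal_half_of_pos {α x : ℝ} (hx : 0 < x) :
    ProbabilityTheory.betaPDFReal α (1 / 2) x =
      (1 / ProbabilityTheory.beta α (1 / 2)) * (x ^ (α - 1) * (√(1 - x))⁻¹) := by
  unfold ProbabilityTheory.betaPDFReal
  rcases lt_or_ge x 1 with h | h
  · rw [if_pos ⟨hx, h⟩, mul_assoc, show (1 / 2 - 1 : ℝ) = -(1 / 2) by norm_num,
      rpow_neg (by linarith), ← sqrt_eq_rpow]
  · rw [if_neg (by simp [h]), sqrt_eq_zero'.2 (by linarith)]
    simp

theorem betaPDFReal_nonneg {α β : ℝ} (hα : 0 < α) (hβ : 0 < β) (x : ℝ) :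
    0 ≤ ProbabilityTheory.betaPDFReal α β x := by
  by_cases h : 0 < x ∧ x < 1
  · exact (ProbabilityTheory.betaPDFReal_pos h.1 h.2 hα hβ).le
  · simp [ProbabilityTheory.betaPDFReal, h]

theorem integrable_betaPDFReal {α β : ℝ} (hα : 0 < α) (hβ : 0 < β) :
    Integrable (ProbabilityTheory.betaPDFReal α β) := by
  refine ⟨(ProbabilityTheory.measurable_betaPDFReal α β).aestronglyMeasurable, ?_⟩
  rw [hasFiniteIntegral_iff_ofReal (.of_forall (betaPDFReal_nonneg hα hβ))]
  exact (ProbabilityTheory.lintegral_betaPDF_eq_one hα hβ).trans_lt ENNReal.one_lt_top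

theorem integral_betaPDFReal {α β : ℝ} (hα : 0 < α) (hβ : 0 < β) :
    ∫ x in Set.Ioi 0, ProbabilityTheory.betaPDFReal α β x = 1 := by
  rw [setIntegral_eq_integral_of_forall_compl_eq_zero, integral_eq_lintegral_of_nonneg_ae
    (.of_forall (betaPDFReal_nonneg hα hβ)) (integrable_betaPDFReal hα hβ).1]
  · exact (congrArg ENNReal.toReal (ProbabilityTheory.lintegral_betaPDF_eq_one hα hβ)).trans
      ENNReal.toReal_one
  · intro x hx
    have : ¬ (0 < x ∧ x < 1) := fun h => hx h.1
    simp [ProbabilityTheory.betaPDFReal, this]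

theorem integrableOn_rpow_mul_inv_sqrt {α : ℝ} (hα : 0 < α) :
    IntegrableOn (fun x : ℝ => x ^ (α - 1) * (√(1 - x))⁻¹) (Set.Ioi 0) := by
  have hb := ProbabilityTheory.beta_pos hα (by norm_num : (0 : ℝ) < 1 / 2)
  refine IntegrableOn.congr_fun ((integrable_betaPDFReal hα (by norm_num :
    (0 : ℝ) < 1 / 2)).integrableOn.const_mul (ProbabilityTheory.beta α (1 / 2)))
    (fun x hx => ?_) measurableSet_Ioi
  simp only [betaPDFReal_half_of_pos (Set.mem_Ioi.1 hx)]
  field_simp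

theorem integral_rpow_mul_inv_sqrt {α : ℝ} (hα : 0 < α) :
    ∫ x in Set.Ioi (0 : ℝ), x ^ (α - 1) * (√(1 - x))⁻¹ = ProbabilityTheory.beta α (1 / 2) := by
  have hb := ProbabilityTheory.beta_pos hα (by norm_num : (0 : ℝ) < 1 / 2)
  have h := integral_betaPDFReal hα (by norm_num : (0 : ℝ) < 1 / 2)
  rw [setIntegral_congr_fun measurableSet_Ioi
    (fun x hx => betaPDFReal_half_of_pos (Set.mem_Ioi.1 hx)), integral_const_mul] at h
  rwa [one_div_mul_eq_div, div_eq_one_iff_eq hb.ne'] at h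

theorem integrableOn_pow_mul_inv_sqrt (n : ℕ) :
    IntegrableOn (fun y : ℝ => y ^ n * (√(1 - y ^ 2))⁻¹) (Set.Ioi 0) := by
  have h := (integrableOn_Ioi_comp_rpow_iff _ (two_ne_zero (α := ℝ))).2
    (integrableOn_rpow_mul_inv_sqrt (α := (n + 1) / 2) (by positivity))
  refine IntegrableOn.congr_fun (h.const_mul (1 / 2)) (fun x hx => ?_) measurableSet_Ioi
  have hx : 0 < x := hx
  have e : (x ^ (2 : ℝ)) ^ (((n : ℝ) + 1) / 2 - 1) * x = x ^ n := by
    rw [← rpow_mul hx.le, ← rpow_add_one hx.ne', ← rpow_natCast]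
    congr 1; ring
  simp only [smul_eq_mul, ← e]
  norm_num
  ring

theorem integral_pow_mul_inv_sqrt (n : ℕ) :
    ∫ y in Set.Ioi (0 : ℝ), y ^ n * (√(1 - y ^ 2))⁻¹ =
      ProbabilityTheory.beta ((n + 1) / 2) (1 / 2) / 2 := by
  rw [← integral_rpow_mul_inv_sqrt (α := (n + 1) / 2) (by positivity),
    ← integral_comp_rpow_Ioi (fun x => x ^ (((n : ℝ) + 1) / 2 - 1) * (√(1 - x))⁻¹)
      (two_ne_zero (α := ℝ)), eq_div_iff two_ne_zero, mul_comm, ← integral_const_mul]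
  refine setIntegral_congr_fun measurableSet_Ioi (fun x hx => ?_)
  have hx : 0 < x := hx
  have e : (x ^ (2 : ℝ)) ^ (((n : ℝ) + 1) / 2 - 1) * x = x ^ n := by
    rw [← rpow_mul hx.le, ← rpow_add_one hx.ne', ← rpow_natCast]
    congr 1; ring
  simp only [smul_eq_mul, ← e]
  norm_num
  ring

theorem integrable_inv_sqrt_one_sub_norm_sq (n : ℕ) [NeZero n] :
    Integrable (fun x : EuclideanSpace ℝ (Fin n) => (√(1 - ‖x‖ ^ 2))⁻¹) :=
  (integrable_fun_norm_addHaar volume (f := fun y : ℝ => (√(1 - y ^ 2))⁻¹)).2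
    (integrableOn_pow_mul_inv_sqrt _)

theorem integral_inv_sqrt_one_sub_norm_sq (k : ℕ) :
    ∫ x : EuclideanSpace ℝ (Fin (2 * k + 1)), (√(1 - ‖x‖ ^ 2))⁻¹ =
      π ^ (k + 1) / (k.factorial : ℝ) := by
  rw [integral_fun_norm_addHaar volume (fun y : ℝ => (√(1 - y ^ 2))⁻¹)]
  simp only [smul_eq_mul, integral_pow_mul_inv_sqrt]
  have hG := Gamma_pos_of_pos (by positivity : (0 : ℝ) < k + 1 / 2)
  rw [measureReal_def, EuclideanSpace.volume_ball, ENNReal.toReal_mul,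
    ENNReal.toReal_ofReal (by positivity), ProbabilityTheory.beta, finrank_euclideanSpace_fin,
    Fintype.card_fin]
  simp only [Nat.add_sub_cancel, ENNReal.ofReal_one, one_pow, ENNReal.toReal_one, one_mul]
  push_cast
  rw [show ((2 * k + 1 : ℝ) / 2 + 1) = (k + 1 / 2) + 1 by ring, Gamma_add_one (by positivity),
    show ((2 * k + 1 : ℝ) / 2) = k + 1 / 2 by ring,
    show ((k : ℝ) + 1 / 2 + 1 / 2) = k + 1 by ring, Gamma_nat_eq_factorial, Gamma_one_half_eq,
    pow_succ, pow_mul, sq_sqrt pi_nonneg, nsmul_eq_mul]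
  push_cast
  field_simp
  rw [sq_sqrt pi_nonneg]
  ring

theorem hasDerivAt_integral_mul_sq_sub_sq_pow (k : ℕ) {g : ℝ → ℝ} (hg : Continuous g) (t : ℝ) :
    HasDerivAt (fun t => ∫ u in (0 : ℝ)..t, g u * (t ^ 2 - u ^ 2) ^ (k + 1))
      (2 * (k + 1) * t * ∫ u in (0 : ℝ)..t, g u * (t ^ 2 - u ^ 2) ^ k) t := by
  have split : ∀ (k : ℕ) (g : ℝ → ℝ), Continuous g → ∀ t : ℝ,
      ∫ u in (0 : ℝ)..t, g u * (t ^ 2 - u ^ 2) ^ (k + 1) =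
        t ^ 2 * (∫ u in (0 : ℝ)..t, g u * (t ^ 2 - u ^ 2) ^ k) -
          ∫ u in (0 : ℝ)..t, (g u * u ^ 2) * (t ^ 2 - u ^ 2) ^ k := by
    intro k g hg t
    rw [← intervalIntegral.integral_const_mul, ← intervalIntegral.integral_sub]
    · congr 1; ext u; ring
    · exact Continuous.intervalIntegrable (by fun_prop) _ _
    · exact Continuous.intervalIntegrable (by fun_prop) _ _
  have base : ∀ g : ℝ → ℝ, Continuous g → HasDerivAt
      (fun t => ∫ u in (0 : ℝ)..t, g u * (t ^ 2 - u ^ 2) ^ 0) (g t) t := by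
    intro g hg
    simpa using intervalIntegral.integral_hasDerivAt_right (hg.intervalIntegrable 0 t)
      (hg.stronglyMeasurableAtFilter _ _) hg.continuousAt
  induction k generalizing g with
  | zero =>
    rw [funext (split 0 g hg)]
    refine (((hasDerivAt_pow 2 t).fun_mul (base g hg)).fun_sub
      (base (fun u => g u * u ^ 2) (by fun_prop))).congr_deriv ?_
    push_cast
    ring
  | succ k ih =>
    rw [funext (split (k + 1) g hg)]
    refine (((hasDerivAt_pow 2 t).fun_mul (ih hg)).fun_sub
      (ih (g := fun u => g u * u ^ 2) (by fun_prop))).congr_deriv ?_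
    have := split k g hg t
    push_cast
    linear_combination (-2 * (k + 1) * t) * this

theorem Dop_const_mul_integral (k : ℕ) (C : ℝ) {g : ℝ → ℝ} (hg : Continuous g) :
    Dop (fun t => C * ∫ u in (0 : ℝ)..t, g u * (t ^ 2 - u ^ 2) ^ (k + 1)) =
      fun t => (C * (2 * (k + 1))) * ∫ u in (0 : ℝ)..t, g u * (t ^ 2 - u ^ 2) ^ k := by
  ext t
  rw [Dop, ((hasDerivAt_integral_mul_sq_sub_sq_pow k hg t).const_mul C).deriv]
  rcases eq_or_ne t 0 with rfl | ht
  · simp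
  · field_simp

theorem iterate_Dop_const_mul_integral (k : ℕ) (C : ℝ) {g : ℝ → ℝ} (hg : Continuous g) :
    (∀ j ≤ k, Differentiable ℝ
      (Dop^[j] (fun t => C * ∫ u in (0 : ℝ)..t, g u * (t ^ 2 - u ^ 2) ^ k))) ∧
    ∀ t, deriv (Dop^[k] (fun t => C * ∫ u in (0 : ℝ)..t, g u * (t ^ 2 - u ^ 2) ^ k)) t =
      C * (2 ^ k * k.factorial) * g t := by
  induction k generalizing C with
  | zero =>
    have h : ∀ t, HasDerivAt (fun t => C * ∫ u in (0 : ℝ)..t, g u * (t ^ 2 - u ^ 2) ^ 0)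
        (C * g t) t := fun t => by
      simpa using (intervalIntegral.integral_hasDerivAt_right (hg.intervalIntegrable 0 t)
        (hg.stronglyMeasurableAtFilter _ _) hg.continuousAt).const_mul C
    refine ⟨fun j hj => ?_, fun t => ?_⟩
    · obtain rfl := Nat.le_zero.1 hj
      exact fun t => (h t).differentiableAt
    · simpa using (h t).deriv
  | succ k ih =>
    obtain ⟨h1, h2⟩ := ih (C * (2 * (k + 1)))
    refine ⟨fun j hj => ?_, fun t => ?_⟩
    · cases j with
      | zero =>
        exact fun t =>
          ((hasDerivAt_integral_mul_sq_sub_sq_pow k hg t).const_mul C).differentiableAt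
      | succ j =>
        rw [Function.iterate_succ_apply, Dop_const_mul_integral k C hg]
        exact h1 j (by omega)
    · rw [Function.iterate_succ_apply, Dop_const_mul_integral k C hg, h2, Nat.factorial_succ]
      push_cast
      ring

theorem integral_inv_sqrt_one_sub_sq_sub_norm_sq (k : ℕ) (s : ℝ) :
    ∫ y : EuclideanSpace ℝ (Fin (2 * k + 1)), (√(1 - (s ^ 2 + ‖y‖ ^ 2)))⁻¹ =
      (Set.Ioo (-1) 1).indicator
        (fun s : ℝ => (π ^ (k + 1) / (k.factorial : ℝ)) * (1 - s ^ 2) ^ k) s := by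
  by_cases hs : s ∈ Set.Ioo (-1 : ℝ) 1
  · rw [Set.indicator_of_mem hs]
    have hpos : 0 < 1 - s ^ 2 := by nlinarith [hs.1, hs.2]
    have hR : 0 < √(1 - s ^ 2) := sqrt_pos.2 hpos
    have h := Measure.integral_comp_smul (volume : Measure (EuclideanSpace ℝ (Fin (2 * k + 1))))
      (fun y => (√(1 - (s ^ 2 + ‖y‖ ^ 2)))⁻¹) (√(1 - s ^ 2))
    have e : ∀ y : EuclideanSpace ℝ (Fin (2 * k + 1)),
        (√(1 - (s ^ 2 + ‖√(1 - s ^ 2) • y‖ ^ 2)))⁻¹ =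
          (√(1 - s ^ 2))⁻¹ * (√(1 - ‖y‖ ^ 2))⁻¹ := fun y => by
      rw [norm_smul, norm_of_nonneg hR.le, mul_pow, sq_sqrt hpos.le, ← mul_inv,
        ← sqrt_mul hpos.le]
      congr 2
      ring
    simp only [e, integral_const_mul, integral_inv_sqrt_one_sub_norm_sq, smul_eq_mul,
      finrank_euclideanSpace_fin] at h
    rw [abs_of_pos (by positivity), pow_succ (√(1 - s ^ 2)), pow_mul, sq_sqrt hpos.le] at h
    have hk : 0 < (1 - s ^ 2) ^ k := by positivity
    field_simp at h ⊢
    linarith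
  · rw [Set.indicator_of_notMem hs]
    refine integral_eq_zero_of_ae (.of_forall fun y => ?_)
    have : 1 ≤ s ^ 2 := by
      by_contra! h
      exact hs (abs_lt.1 ((sq_lt_one_iff_abs_lt_one s).1 h))
    simp only [Pi.zero_apply, inv_eq_zero]
    exact sqrt_eq_zero'.2 (by nlinarith [sq_nonneg ‖y‖])

/-- Splitting off the first coordinate of a Euclidean space. -/
noncomputable def euclideanSplit (n : ℕ) :
    EuclideanSpace ℝ (Fin (n + 1)) ≃ᵐ ℝ × EuclideanSpace ℝ (Fin n) :=
  ((MeasurableEquiv.toLp 2 (Fin (n + 1) → ℝ)).symm.trans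
    (MeasurableEquiv.piFinSuccAbove (fun _ => ℝ) 0)).trans
      ((MeasurableEquiv.refl ℝ).prodCongr (MeasurableEquiv.toLp 2 (Fin n → ℝ)))

theorem measurePreserving_euclideanSplit (n : ℕ) : MeasurePreserving (euclideanSplit n) :=
  ((MeasurePreserving.id volume).prod (PiLp.volume_preserving_toLp (Fin n))).comp
    ((volume_preserving_piFinSuccAbove (fun _ => ℝ) 0).comp
      (EuclideanSpace.volume_preserving_symm_measurableEquiv_toLp (Fin (n + 1))))

theorem euclideanSplit_fst {n : ℕ} (x : EuclideanSpace ℝ (Fin (n + 1))) :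
    (euclideanSplit n x).1 = x 0 := rfl

theorem norm_sq_eq_euclideanSplit {n : ℕ} (x : EuclideanSpace ℝ (Fin (n + 1))) :
    ‖x‖ ^ 2 = (euclideanSplit n x).1 ^ 2 + ‖(euclideanSplit n x).2‖ ^ 2 := by
  rw [EuclideanSpace.real_norm_sq_eq, EuclideanSpace.real_norm_sq_eq, Fin.sum_univ_succ]
  rfl

theorem integrable_mul_inv_sqrt {n : ℕ} [NeZero n] {f : EuclideanSpace ℝ (Fin n) → ℝ}
    (hf : Continuous f) (hb : ∀ x, |f x| ≤ 1) :
    Integrable (fun x => f x * (√(1 - ‖x‖ ^ 2))⁻¹) :=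
  (integrable_inv_sqrt_one_sub_norm_sq n).bdd_mul hf.aestronglyMeasurable (c := 1)
    (.of_forall hb)

theorem integral_cos_coord_mul_inv_sqrt (k : ℕ) (c : ℝ) :
    ∫ x : EuclideanSpace ℝ (Fin (2 * k + 1 + 1)), cos (c * x 0) * (√(1 - ‖x‖ ^ 2))⁻¹ =
      (2 * π ^ (k + 1) / (k.factorial : ℝ)) *
        ∫ s in (0 : ℝ)..1, cos (c * s) * (1 - s ^ 2) ^ k := by
  let F : ℝ × EuclideanSpace ℝ (Fin (2 * k + 1)) → ℝ :=
    fun p => cos (c * p.1) * (√(1 - (p.1 ^ 2 + ‖p.2‖ ^ 2)))⁻¹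
  have hF : (fun x : EuclideanSpace ℝ (Fin (2 * k + 1 + 1)) =>
      cos (c * x 0) * (√(1 - ‖x‖ ^ 2))⁻¹) = F ∘ euclideanSplit (2 * k + 1) := by
    ext x
    simp only [F, Function.comp, norm_sq_eq_euclideanSplit x, euclideanSplit_fst]
  have hφ := measurePreserving_euclideanSplit (2 * k + 1)
  have hint : Integrable F := by
    rw [← hφ.integrable_comp_emb (MeasurableEquiv.measurableEmbedding _), ← hF]
    exact integrable_mul_inv_sqrt (by fun_prop) fun x => abs_cos_le_one _
  have hs : ∀ s : ℝ, ∫ y, F (s, y) = (Set.Ioo (-1) 1).indicator (fun s : ℝ =>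
      (π ^ (k + 1) / (k.factorial : ℝ)) * (cos (c * s) * (1 - s ^ 2) ^ k)) s := fun s => by
    simp only [F]
    rw [integral_const_mul, integral_inv_sqrt_one_sub_sq_sub_norm_sq]
    by_cases h : s ∈ Set.Ioo (-1 : ℝ) 1
    · rw [Set.indicator_of_mem h, Set.indicator_of_mem h]; ring
    · rw [Set.indicator_of_notMem h, Set.indicator_of_notMem h, mul_zero]
  have hii : ∀ a b : ℝ, IntervalIntegrable (fun s : ℝ => cos (c * s) * (1 - s ^ 2) ^ k)
      volume a b := fun a b => Continuous.intervalIntegrable (by fun_prop) _ _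
  have hneg : ∫ s in (-1 : ℝ)..0, cos (c * s) * (1 - s ^ 2) ^ k =
      ∫ s in (0 : ℝ)..1, cos (c * s) * (1 - s ^ 2) ^ k := by
    have := intervalIntegral.integral_comp_neg (a := 0) (b := 1)
      (fun s : ℝ => cos (c * s) * (1 - s ^ 2) ^ k)
    simpa using this.symm
  rw [hF, Function.comp_def, hφ.integral_comp' F, Measure.volume_eq_prod, integral_prod _ hint]
  simp only [hs]
  rw [integral_indicator measurableSet_Ioo, ← integral_Ioc_eq_integral_Ioo,
    ← intervalIntegral.integral_of_le (by norm_num), intervalIntegral.integral_const_mul,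
    ← intervalIntegral.integral_add_adjacent_intervals (hii (-1) 0) (hii 0 1), hneg]
  ring

theorem integral_cos_inner_mul_inv_sqrt {n : ℕ} (b : EuclideanSpace ℝ (Fin (n + 1))) :
    ∫ x : EuclideanSpace ℝ (Fin (n + 1)), cos (inner ℝ b x) * (√(1 - ‖x‖ ^ 2))⁻¹ =
      ∫ x : EuclideanSpace ℝ (Fin (n + 1)), cos (‖b‖ * x 0) * (√(1 - ‖x‖ ^ 2))⁻¹ := by
  let w : EuclideanSpace ℝ (Fin (n + 1)) := EuclideanSpace.single 0 ‖b‖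
  have hw : ‖w‖ = ‖b‖ := by simp [w]
  let L := (ℝ ∙ (w - b))ᗮ.reflection
  have hL : L w = b := Submodule.reflection_sub hw
  rw [← L.measurePreserving.integral_comp' (f := L.toMeasurableEquiv)]
  congr 1
  ext x
  change cos (inner ℝ b (L x)) * (√(1 - ‖L x‖ ^ 2))⁻¹ = _
  rw [← hL, L.inner_map_map, L.norm_map, L.norm_map, hw]
  simp [w, EuclideanSpace.inner_single_left, mul_comm]

/-- Negation of the `j`-th coordinate, as a linear isometry. -/
noncomputable def flipCoord {n : ℕ} (j : Fin n) :
    EuclideanSpace ℝ (Fin n) ≃ₗᵢ[ℝ] EuclideanSpace ℝ (Fin n) :=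
  LinearIsometryEquiv.piLpCongrRight 2
    fun i => if i = j then LinearIsometryEquiv.neg ℝ else LinearIsometryEquiv.refl ℝ ℝ

theorem flipCoord_same {n : ℕ} (j : Fin n) (x : EuclideanSpace ℝ (Fin n)) :
    flipCoord j x j = -x j := by
  simp [flipCoord, LinearIsometryEquiv.piLpCongrRight_apply]

theorem flipCoord_of_ne {n : ℕ} {i j : Fin n} (h : i ≠ j) (x : EuclideanSpace ℝ (Fin n)) :
    flipCoord j x i = x i := by
  simp [flipCoord, LinearIsometryEquiv.piLpCongrRight_apply, h]

theorem integral_prod_cos_mul_cos_sum {n : ℕ} [NeZero n] (c : Fin n → ℝ) (S : Finset (Fin n)) :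
    ∫ x : EuclideanSpace ℝ (Fin n), (∏ i ∈ S, cos (c i * x i)) *
        cos (∑ i ∈ Sᶜ, c i * x i) * (√(1 - ‖x‖ ^ 2))⁻¹ =
      ∫ x : EuclideanSpace ℝ (Fin n), cos (∑ i, c i * x i) * (√(1 - ‖x‖ ^ 2))⁻¹ := by
  have hprod : ∀ (T : Finset (Fin n)) (x : EuclideanSpace ℝ (Fin n)) (y : ℝ),
      |(∏ i ∈ T, cos (c i * x i)) * cos y| ≤ 1 := fun T x y => by
    rw [abs_mul, Finset.abs_prod]
    exact mul_le_one₀ (Finset.prod_le_one (fun _ _ => abs_nonneg _) fun _ _ => abs_cos_le_one _)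
      (abs_nonneg _) (abs_cos_le_one _)
  induction S using Finset.induction_on with
  | empty => simp
  | insert j S hj ih =>
    rw [← ih]
    have hc : Sᶜ = insert j (insert j S)ᶜ := by ext i; by_cases h : i = j <;> simp [h, hj]
    have hj' : j ∉ (insert j S)ᶜ := by simp
    have hS : ∀ x, ∏ i ∈ S, cos (c i * flipCoord j x i) = ∏ i ∈ S, cos (c i * x i) := fun x =>
      Finset.prod_congr rfl fun i hi => by rw [flipCoord_of_ne (ne_of_mem_of_not_mem hi hj)]
    have hT : ∀ x, ∑ i ∈ (insert j S)ᶜ, c i * flipCoord j x i =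
        ∑ i ∈ (insert j S)ᶜ, c i * x i := fun x =>
      Finset.sum_congr rfl fun i hi => by rw [flipCoord_of_ne (ne_of_mem_of_not_mem hi hj')]
    have hflip : ∫ x : EuclideanSpace ℝ (Fin n), (∏ i ∈ S, cos (c i * x i)) *
          cos (∑ i ∈ Sᶜ, c i * x i) * (√(1 - ‖x‖ ^ 2))⁻¹ =
        ∫ x : EuclideanSpace ℝ (Fin n), (∏ i ∈ S, cos (c i * x i)) *
          cos (-(c j * x j) + ∑ i ∈ (insert j S)ᶜ, c i * x i) * (√(1 - ‖x‖ ^ 2))⁻¹ := by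
      rw [← (flipCoord j).measurePreserving.integral_comp'
        (f := (flipCoord j).toMeasurableEquiv)]
      congr 1
      ext x
      change (∏ i ∈ S, cos (c i * flipCoord j x i)) *
          cos (∑ i ∈ Sᶜ, c i * flipCoord j x i) * (√(1 - ‖flipCoord j x‖ ^ 2))⁻¹ = _
      rw [hS, hc, Finset.sum_insert hj', hT, flipCoord_same, (flipCoord j).norm_map, mul_neg]
    have hI : Integrable fun x : EuclideanSpace ℝ (Fin n) => (∏ i ∈ S, cos (c i * x i)) *
        cos (∑ i ∈ Sᶜ, c i * x i) * (√(1 - ‖x‖ ^ 2))⁻¹ :=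
      integrable_mul_inv_sqrt (by fun_prop) fun x => hprod S x _
    have hI' : Integrable fun x : EuclideanSpace ℝ (Fin n) => (∏ i ∈ S, cos (c i * x i)) *
        cos (-(c j * x j) + ∑ i ∈ (insert j S)ᶜ, c i * x i) * (√(1 - ‖x‖ ^ 2))⁻¹ :=
      integrable_mul_inv_sqrt (by fun_prop) fun x => hprod S x _
    have hadd := integral_add hI hI'
    rw [← hflip, ← two_mul] at hadd
    rw [← mul_right_inj' (two_ne_zero (α := ℝ)), ← hadd, ← integral_const_mul]
    congr 1
    ext x
    rw [Finset.prod_insert hj, hc, Finset.sum_insert hj', cos_add, cos_add, cos_neg,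
      sin_neg]
    ring

theorem pow_mul_integral_prod_cos {k N : ℕ} (hN : N = 2 * k + 1 + 1) (a : Fin N → ℝ) (t : ℝ) :
    t ^ (2 * k + 1) * ∫ ω in Metric.closedBall (0 : EuclideanSpace ℝ (Fin N)) 1,
        (∏ i, cos (t * ω i * a i)) * (1 - ‖ω‖ ^ 2) ^ (-(1 : ℝ) / 2) =
      (2 * π ^ (k + 1) / (k.factorial : ℝ)) *
        ∫ u in (0 : ℝ)..t, cos (√(∑ i, a i ^ 2) * u) * (t ^ 2 - u ^ 2) ^ k := by
  subst hN
  have hw : ∀ x : ℝ, x ^ (-(1 : ℝ) / 2) = (√x)⁻¹ := fun x => by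
    rcases le_or_gt 0 x with h | h
    · rw [neg_div, rpow_neg h, ← sqrt_eq_rpow]
    · rw [rpow_def_of_neg h, sqrt_eq_zero'.2 h.le,
        show -(1 : ℝ) / 2 * π = -(π / 2) by ring, cos_neg, cos_pi_div_two]
      simp
  let b : EuclideanSpace ℝ (Fin (2 * k + 1 + 1)) := WithLp.toLp 2 fun i => t * a i
  have hb : ‖b‖ = |t| * √(∑ i, a i ^ 2) := by
    rw [EuclideanSpace.norm_eq, ← sqrt_sq_eq_abs, ← sqrt_mul (sq_nonneg t), Finset.mul_sum]
    simp [b, mul_pow]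
  have hint : ∫ ω in Metric.closedBall (0 : EuclideanSpace ℝ (Fin (2 * k + 1 + 1))) 1,
      (∏ i, cos (t * ω i * a i)) * (1 - ‖ω‖ ^ 2) ^ (-(1 : ℝ) / 2) =
        (2 * π ^ (k + 1) / (k.factorial : ℝ)) *
          ∫ s in (0 : ℝ)..1, cos (√(∑ i, a i ^ 2) * (t * s)) * (1 - s ^ 2) ^ k := by
    simp only [hw]
    rw [setIntegral_eq_integral_of_forall_compl_eq_zero]
    · have h := integral_prod_cos_mul_cos_sum (fun i => t * a i) Finset.univ
      simp only [Finset.compl_univ, Finset.sum_empty, cos_zero, mul_one] at h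
      have h' := integral_cos_inner_mul_inv_sqrt b
      simp only [PiLp.inner_apply, b, RCLike.inner_apply, conj_trivial] at h'
      simp only [mul_right_comm t _ (a _)]
      rw [h]
      simp only [mul_comm _ (t * a _)] at h'
      rw [h', integral_cos_coord_mul_inv_sqrt]
      congr 2
      ext s
      congr 1
      change cos (‖b‖ * s) = _
      rw [hb]
      rcases abs_choice t with h | h <;> rw [h]
      · congr 1; ring
      · rw [← cos_neg]; congr 1; ring
    · intro x hx
      rw [mem_closedBall_zero_iff, not_le] at hx
      rw [sqrt_eq_zero'.2 (by nlinarith), inv_zero, mul_zero]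
  rw [hint, mul_left_comm]
  congr 1
  have h := intervalIntegral.smul_integral_comp_mul_left (a := 0) (b := 1)
    (fun u => cos (√(∑ i, a i ^ 2) * u) * (t ^ 2 - u ^ 2) ^ k) t
  rw [mul_zero, mul_one, smul_eq_mul] at h
  rw [← h, pow_succ', mul_assoc, ← intervalIntegral.integral_const_mul]
  congr 2
  ext s
  rw [show t ^ 2 - (t * s) ^ 2 = t ^ 2 * (1 - s ^ 2) by ring, mul_pow, pow_mul]
  ring

theorem stmt1 (m : ℕ) (hm : 1 ≤ m) (a : Fin (2*m) → ℝ)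
    (G : ℝ → ℝ)
    (hG : ∀ t : ℝ, G t = t ^ (2*m-1) *
      ∫ ω in Metric.closedBall (0 : EuclideanSpace ℝ (Fin (2*m))) 1,
        (∏ i, Real.cos (t * ω i * a i)) * (1 - ‖ω‖^2) ^ (-(1:ℝ)/2)) :
    (∀ k < m, ∀ t ∈ Set.Ioi (0:ℝ), DifferentiableAt ℝ (Dop^[k] G) t) ∧
    ∀ t ∈ Set.Ioi (0:ℝ),
      Real.cos (t * Real.sqrt (∑ i, (a i)^2)) =
        (1 / (2*π)^m) * deriv (Dop^[m-1] G) t := by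
  obtain ⟨k, rfl⟩ : ∃ k, m = k + 1 := ⟨m - 1, by omega⟩
  have hG' : G = fun t => (2 * π ^ (k + 1) / (k.factorial : ℝ)) *
      ∫ u in (0 : ℝ)..t, cos (√(∑ i, a i ^ 2) * u) * (t ^ 2 - u ^ 2) ^ k := by
    ext t
    rw [hG, ← pow_mul_integral_prod_cos (by ring) a t]
    rfl
  obtain ⟨h1, h2⟩ := iterate_Dop_const_mul_integral k (2 * π ^ (k + 1) / (k.factorial : ℝ))
    (g := fun u => cos (√(∑ i, a i ^ 2) * u)) (by fun_prop)
  rw [hG']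
  refine ⟨fun j hj t _ => h1 j (by omega) t, fun t _ => ?_⟩
  rw [Nat.add_sub_cancel, h2, mul_comm t, mul_pow]
  have : (k.factorial : ℝ) ≠ 0 := by positivity
  field_simp
  ring
end

section
/- Let m ≥ 1 and a = (a₁,…,a_{2m}) ∈ ℝ^{2m}. Then for every t ∈ ℝ, t^{2m−1} ∫_{‖ω‖≤1, ω∈ℝ^{2m}} cos(ω₁a₁t)·cos(ω₂a₂t)⋯cos(ω_{2m}a_{2m}t) · (1−‖ω‖²)^{−1/2} dω = Σ_{α∈ℕ^{2m}} (−1)^{|α|} (2π)^m · a^{2α} · t^{2|α|+2m−1} / (2^{|α|} · α! · (2|α|+2m−1)!!), where the series converges absolutely. -/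
open MeasureTheory Real

theorem summable_norm_and_tsum_pi_prod {R : Type*} [NormedCommRing R] [NormOneClass R]
    [CompleteSpace R] {n : ℕ}
    {f : Fin n → ℕ → R} (hf : ∀ i, Summable fun k => ‖f i k‖) :
    Summable (fun α : Fin n → ℕ => ‖∏ i, f i (α i)‖) ∧
      ∑' α : Fin n → ℕ, ∏ i, f i (α i) = ∏ i, ∑' k, f i k := by
  induction n with
  | zero => exact ⟨(hasSum_fintype _).summable, by simp⟩
  | succ n ih =>
    obtain ⟨hs, ht⟩ := ih fun i => hf i.succ
    have key (p : ℕ × (Fin n → ℕ)) :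
        ∏ i, f i (Fin.consEquiv (fun _ => ℕ) p i) = f 0 p.1 * ∏ i, f i.succ (p.2 i) := by
      simp [Fin.prod_univ_succ, Fin.consEquiv]
    constructor
    · rw [← (Fin.consEquiv fun _ => ℕ).summable_iff]
      simpa only [Function.comp_def, key] using (hf 0).mul_norm hs
    · rw [← (Fin.consEquiv fun _ => ℕ).tsum_eq]
      simp only [key]
      rw [← tsum_mul_tsum_of_summable_norm (hf 0) hs, ht, Fin.prod_univ_succ]

theorem rpow_neg_half_of_nonpos {u : ℝ} (hu : u ≤ 0) : u ^ (-(1 : ℝ) / 2) = 0 := by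
  rcases hu.lt_or_eq with h | rfl
  · rw [rpow_def_of_neg h, show -(1 : ℝ) / 2 * π = -(π / 2) by ring, cos_neg, cos_pi_div_two,
      mul_zero]
  · exact zero_rpow (by norm_num)

theorem rpow_neg_half_nonneg (u : ℝ) : 0 ≤ u ^ (-(1 : ℝ) / 2) := by
  rcases le_total u 0 with h | h
  · exact (rpow_neg_half_of_nonpos h).ge
  · positivity

theorem mul_rpow_neg_half {c : ℝ} (hc : 0 < c) (u : ℝ) :
    (c * u) ^ (-(1 : ℝ) / 2) = c ^ (-(1 : ℝ) / 2) * u ^ (-(1 : ℝ) / 2) := by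
  rcases le_total u 0 with h | h
  · rw [rpow_neg_half_of_nonpos h, rpow_neg_half_of_nonpos (mul_nonpos_of_nonneg_of_nonpos hc.le h),
      mul_zero]
  · exact mul_rpow hc.le h

theorem integrable_pow_mul_exp_neg_sq (k : ℕ) :
    Integrable fun x : ℝ => x ^ (2 * k) * exp (-x ^ 2) := by
  have := integrable_rpow_mul_exp_neg_mul_sq one_pos (s := (2 * k : ℕ))
    (by have : (0 : ℝ) ≤ (2 * k : ℕ) := Nat.cast_nonneg _
        linarith)
  simpa only [rpow_natCast, neg_one_mul] using this

theorem integral_pow_mul_exp_neg_sq (k : ℕ) :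
    ∫ x : ℝ, x ^ (2 * k) * exp (-x ^ 2) = Gamma (k + 1 / 2) := by
  have h := integral_comp_abs (f := fun x => x ^ (2 * k) * exp (-x ^ 2))
  simp only [sq_abs, (even_two_mul k).pow_abs] at h
  have h2 := integral_rpow_mul_exp_neg_rpow (p := 2) (q := (2 * k : ℕ)) two_pos
    (by have : (0 : ℝ) ≤ (2 * k : ℕ) := Nat.cast_nonneg _
        linarith)
  simp only [rpow_natCast, rpow_ofNat] at h2
  rw [h, h2, ← mul_assoc, mul_one_div_cancel two_ne_zero, one_mul]
  congr 1
  push_cast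
  ring

theorem lintegral_rpow_mul_exp_neg {s : ℝ} (hs : 0 < s) :
    ∫⁻ x in Set.Ioi (0 : ℝ), ENNReal.ofReal (x ^ (s - 1) * exp (-x)) =
      ENNReal.ofReal (Gamma s) := by
  simp_rw [mul_comm _ (exp _)]
  rw [Gamma_eq_integral hs, ofReal_integral_eq_lintegral_ofReal (GammaIntegral_convergent hs)]
  filter_upwards [ae_restrict_mem measurableSet_Ioi] with x hx
  have : (0 : ℝ) < x := hx
  positivity

section Moments

variable {ι : Type*} [Fintype ι]

theorem lintegral_prod_pow_mul_exp_neg_norm_sq (α : ι → ℕ) :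
    ∫⁻ ω : EuclideanSpace ℝ ι, ENNReal.ofReal ((∏ i, ω i ^ (2 * α i)) * exp (-‖ω‖ ^ 2)) =
      ENNReal.ofReal (∏ i, Gamma (α i + 1 / 2)) := by
  have h (x : ι → ℝ) : (∏ i, x i ^ (2 * α i)) * exp (-‖WithLp.toLp 2 x‖ ^ 2) =
      ∏ i, x i ^ (2 * α i) * exp (-x i ^ 2) := by
    simp [EuclideanSpace.norm_sq_eq, Finset.prod_mul_distrib, ← exp_sum]
  rw [← (PiLp.volume_preserving_toLp ι).lintegral_comp_emb
    (MeasurableEquiv.toLp 2 (ι → ℝ)).measurableEmbedding]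
  simp only [h]
  rw [volume_pi, ← ofReal_integral_eq_lintegral_ofReal
    (Integrable.fintype_prod fun i => integrable_pow_mul_exp_neg_sq (α i)),
    ← volume_pi, integral_fintype_prod_volume_eq_prod (fun i (x : ℝ) => x ^ (2 * α i) * exp (-x ^ 2))]
  · simp only [integral_pow_mul_exp_neg_sq]
  · exact .of_forall fun x => Finset.prod_nonneg fun i _ =>
      mul_nonneg ((even_two_mul _).pow_nonneg _) (exp_pos _).le

theorem lintegral_eq_mul_lintegral_comp_smul {E : Type*} [NormedAddCommGroup E] [NormedSpace ℝ E]
    [MeasurableSpace E] [BorelSpace E] [FiniteDimensional ℝ E] (μ : Measure E)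
    [μ.IsAddHaarMeasure] {f : E → ENNReal} (hf : Measurable f) {r : ℝ} (hr : 0 < r) :
    ∫⁻ x, f x ∂μ = ENNReal.ofReal (r ^ Module.finrank ℝ E) * ∫⁻ x, f (r • x) ∂μ := by
  rw [← lintegral_map hf (measurable_const_smul r), Measure.map_addHaar_smul μ hr.ne',
    lintegral_smul_measure, smul_eq_mul, ← mul_assoc, ← ENNReal.ofReal_mul (by positivity),
    abs_of_pos (by positivity), mul_inv_cancel₀ (by positivity), ENNReal.ofReal_one, one_mul]

theorem prod_pow_even_nonneg (α : ι → ℕ) (x : ι → ℝ) : 0 ≤ ∏ i, x i ^ (2 * α i) :=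
  Finset.prod_nonneg fun _ _ => (even_two_mul _).pow_nonneg _

theorem lintegral_prod_pow_mul_rpow_sub_norm_sq (α : ι → ℕ) {c : ℝ} (hc : 0 < c) :
    ∫⁻ ω : EuclideanSpace ℝ ι,
        ENNReal.ofReal ((∏ i, ω i ^ (2 * α i)) * (c - ‖ω‖ ^ 2) ^ (-(1 : ℝ) / 2)) =
      ENNReal.ofReal (c ^ ((∑ i, α i) + (Fintype.card ι + 1 : ℝ) / 2 - 1)) *
        ∫⁻ ω : EuclideanSpace ℝ ι,
          ENNReal.ofReal ((∏ i, ω i ^ (2 * α i)) * (1 - ‖ω‖ ^ 2) ^ (-(1 : ℝ) / 2)) := by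
  have hs : 0 < √c := sqrt_pos.2 hc
  have h (ω : EuclideanSpace ℝ ι) :
      (∏ i, (√c • ω) i ^ (2 * α i)) * (c - ‖√c • ω‖ ^ 2) ^ (-(1 : ℝ) / 2) =
      (c ^ (∑ i, α i) * c ^ (-(1 : ℝ) / 2)) *
        ((∏ i, ω i ^ (2 * α i)) * (1 - ‖ω‖ ^ 2) ^ (-(1 : ℝ) / 2)) := by
    have h1 : c - ‖√c • ω‖ ^ 2 = c * (1 - ‖ω‖ ^ 2) := by
      rw [norm_smul, mul_pow, norm_of_nonneg hs.le, sq_sqrt hc.le]; ring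
    have h2 : ∏ i, (√c • ω) i ^ (2 * α i) = c ^ (∑ i, α i) * ∏ i, ω i ^ (2 * α i) := by
      simp only [PiLp.smul_apply, smul_eq_mul, mul_pow, Finset.prod_mul_distrib, pow_mul √c,
        sq_sqrt hc.le, Finset.prod_pow_eq_pow_sum]
    rw [h1, h2, mul_rpow_neg_half hc]; ring
  rw [lintegral_eq_mul_lintegral_comp_smul volume (by fun_prop) hs]
  simp only [h]
  simp_rw [ENNReal.ofReal_mul (show 0 ≤ c ^ (∑ i, α i) * c ^ (-(1 : ℝ) / 2) by positivity)]
  rw [lintegral_const_mul _ (by fun_prop), ← mul_assoc, ← ENNReal.ofReal_mul (by positivity)]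
  congr 2
  rw [finrank_euclideanSpace, sqrt_eq_rpow, ← rpow_natCast, ← rpow_natCast, ← rpow_mul hc.le,
    ← rpow_add hc, ← rpow_add hc]
  congr 1
  push_cast
  ring

theorem lintegral_rpow_sub_mul_exp_neg (b : ℝ) :
    ∫⁻ c, ENNReal.ofReal ((c - b) ^ (-(1 : ℝ) / 2) * exp (-c)) =
      ENNReal.ofReal (√π * exp (-b)) := by
  have h (c : ℝ) : (c - b) ^ (-(1 : ℝ) / 2) * exp (-c) =
      exp (-b) * ((c - b) ^ (-(1 : ℝ) / 2) * exp (-(c - b))) := by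
    rw [mul_left_comm, ← exp_add]
    ring_nf
  simp only [h]
  rw [lintegral_sub_right_eq_self
    (fun u => ENNReal.ofReal (exp (-b) * (u ^ (-(1 : ℝ) / 2) * exp (-u)))) b]
  simp_rw [ENNReal.ofReal_mul (exp_pos (-b)).le]
  rw [lintegral_const_mul _ (by fun_prop), mul_comm √π, ENNReal.ofReal_mul (exp_pos _).le,
    ← Gamma_one_half_eq, ← lintegral_rpow_mul_exp_neg one_half_pos,
    show (1 : ℝ) / 2 - 1 = -1 / 2 by norm_num, setLIntegral_eq_of_support_subset]
  intro u hu
  by_contra h0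
  exact hu (by simp [rpow_neg_half_of_nonpos (not_lt.1 h0)])

theorem lintegral_prod_pow_mul_rpow_one_sub_norm_sq (α : ι → ℕ) :
    (∫⁻ ω : EuclideanSpace ℝ ι,
        ENNReal.ofReal ((∏ i, ω i ^ (2 * α i)) * (1 - ‖ω‖ ^ 2) ^ (-(1 : ℝ) / 2))) =
      ENNReal.ofReal (√π * (∏ i, Gamma (α i + 1 / 2)) /
        Gamma ((∑ i, α i) + (Fintype.card ι + 1 : ℝ) / 2)) := by
  set M := ∫⁻ ω : EuclideanSpace ℝ ι,
        ENNReal.ofReal ((∏ i, ω i ^ (2 * α i)) * (1 - ‖ω‖ ^ 2) ^ (-(1 : ℝ) / 2))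
  have hs : 0 < (∑ i, α i) + (Fintype.card ι + 1 : ℝ) / 2 := by positivity
  let F : EuclideanSpace ℝ ι → ℝ → ENNReal := fun ω c =>
    ENNReal.ofReal ((∏ i, ω i ^ (2 * α i)) * ((c - ‖ω‖ ^ 2) ^ (-(1 : ℝ) / 2) * exp (-c)))
  have h1 : ∫⁻ ω, ∫⁻ c, F ω c = ENNReal.ofReal (√π * ∏ i, Gamma (α i + 1 / 2)) := by
    have (ω : EuclideanSpace ℝ ι) : ∫⁻ c, F ω c = ENNReal.ofReal √π *
        ENNReal.ofReal ((∏ i, ω i ^ (2 * α i)) * exp (-‖ω‖ ^ 2)) := by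
      simp only [F, ENNReal.ofReal_mul (prod_pow_even_nonneg α _)]
      rw [lintegral_const_mul _ (by fun_prop), lintegral_rpow_sub_mul_exp_neg,
        ENNReal.ofReal_mul (sqrt_nonneg _), mul_left_comm]
    simp only [this]
    rw [lintegral_const_mul _ (by fun_prop), lintegral_prod_pow_mul_exp_neg_norm_sq,
      ENNReal.ofReal_mul (sqrt_nonneg _)]
  have h2 : ∫⁻ c, ∫⁻ ω, F ω c =
      ENNReal.ofReal (Gamma ((∑ i, α i) + (Fintype.card ι + 1 : ℝ) / 2)) * M := by
    rw [← lintegral_rpow_mul_exp_neg hs, ← lintegral_mul_const _ (by fun_prop),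
      ← setLIntegral_eq_of_support_subset (s := Set.Ioi 0)]
    · refine setLIntegral_congr_fun measurableSet_Ioi fun c hc => ?_
      simp only [F, ← mul_assoc]
      simp_rw [ENNReal.ofReal_mul' (exp_pos (-c)).le]
      rw [lintegral_mul_const _ (by fun_prop), lintegral_prod_pow_mul_rpow_sub_norm_sq α hc]
      ring
    · intro c hc
      by_contra! h0
      rw [Set.mem_Ioi, not_lt] at h0
      refine hc ?_
      have (ω : EuclideanSpace ℝ ι) : F ω c = 0 := by
        simp [F, rpow_neg_half_of_nonpos (show c - ‖ω‖ ^ 2 ≤ 0 by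
          nlinarith [sq_nonneg ‖ω‖])]
      simp [this]
  have h3 := lintegral_lintegral_swap (μ := (volume : Measure (EuclideanSpace ℝ ι)))
    (ν := (volume : Measure ℝ)) (f := F) (by simp only [F, Function.uncurry_def]; fun_prop)
  have hG := Gamma_pos_of_pos hs
  rw [h1, h2] at h3
  rw [ENNReal.ofReal_div_of_pos hG,
    ENNReal.eq_div_iff (by simpa using hG) ENNReal.ofReal_ne_top, h3]

theorem integrable_prod_pow_mul_rpow_one_sub_norm_sq (α : ι → ℕ) :
    Integrable fun ω : EuclideanSpace ℝ ι =>
      (∏ i, ω i ^ (2 * α i)) * (1 - ‖ω‖ ^ 2) ^ (-(1 : ℝ) / 2) := by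
  rw [← lintegral_ofReal_ne_top_iff_integrable (by fun_prop)
    (.of_forall fun ω => mul_nonneg (prod_pow_even_nonneg α _) (rpow_neg_half_nonneg _)),
    lintegral_prod_pow_mul_rpow_one_sub_norm_sq]
  exact ENNReal.ofReal_ne_top

theorem integral_prod_pow_mul_rpow_one_sub_norm_sq (α : ι → ℕ) :
    ∫ ω : EuclideanSpace ℝ ι, (∏ i, ω i ^ (2 * α i)) * (1 - ‖ω‖ ^ 2) ^ (-(1 : ℝ) / 2) =
      √π * (∏ i, Gamma (α i + 1 / 2)) / Gamma ((∑ i, α i) + (Fintype.card ι + 1 : ℝ) / 2) := by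
  rw [integral_eq_lintegral_of_nonneg_ae
    (.of_forall fun ω => mul_nonneg (prod_pow_even_nonneg α _) (rpow_neg_half_nonneg _))
    (by fun_prop), lintegral_prod_pow_mul_rpow_one_sub_norm_sq, ENNReal.toReal_ofReal]
  have h (i : ι) : 0 < Gamma (α i + 1 / 2) := Gamma_pos_of_pos (by positivity)
  have h' : 0 < Gamma ((∑ i, α i) + (Fintype.card ι + 1 : ℝ) / 2) :=
    Gamma_pos_of_pos (by positivity)
  exact div_nonneg (mul_nonneg (sqrt_nonneg _) (Finset.prod_nonneg fun i _ => (h i).le)) h'.le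

end Moments

theorem factorial_two_mul_eq (k : ℕ) :
    (2 * k).factorial = 2 ^ k * k.factorial * (2 * k - 1).doubleFactorial := by
  cases k with
  | zero => rfl
  | succ k =>
    rw [show 2 * (k + 1) = 2 * k + 1 + 1 by ring, Nat.factorial_eq_mul_doubleFactorial,
      show 2 * k + 1 + 1 = 2 * (k + 1) by ring, Nat.doubleFactorial_two_mul]
    rfl

theorem Gamma_add_half_div_factorial (k : ℕ) :
    Gamma (k + 1 / 2) / (2 * k).factorial = √π / (4 ^ k * k.factorial) := by
  have h : ((2 * k - 1).doubleFactorial : ℝ) ≠ 0 := by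
    exact_mod_cast (Nat.doubleFactorial_pos _).ne'
  rw [Gamma_nat_add_half, factorial_two_mul_eq, show (4 : ℝ) = 2 * 2 by norm_num, mul_pow]
  push_cast
  field_simp

theorem prod_cos_term_eq {ι : Type*} [Fintype ι] (a : ι → ℝ) (α : ι → ℕ) (ω : EuclideanSpace ℝ ι) :
    (∏ i, (-1) ^ α i * (ω i * a i) ^ (2 * α i) / (2 * α i).factorial) *
        (1 - ‖ω‖ ^ 2) ^ (-(1 : ℝ) / 2) =
      (∏ i, (-(a i ^ 2)) ^ α i / (2 * α i).factorial) *
        ((∏ i, ω i ^ (2 * α i)) * (1 - ‖ω‖ ^ 2) ^ (-(1 : ℝ) / 2)) := by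
  rw [← mul_assoc, ← Finset.prod_mul_distrib]
  congr 1
  refine Finset.prod_congr rfl fun i _ => ?_
  rw [neg_pow (a i ^ 2), mul_pow, ← pow_mul]
  ring

theorem integrable_prod_cos_term {ι : Type*} [Fintype ι] (a : ι → ℝ) (α : ι → ℕ) :
    Integrable fun ω : EuclideanSpace ℝ ι =>
      (∏ i, (-1) ^ α i * (ω i * a i) ^ (2 * α i) / (2 * α i).factorial) *
        (1 - ‖ω‖ ^ 2) ^ (-(1 : ℝ) / 2) := by
  simp only [prod_cos_term_eq]
  exact (integrable_prod_pow_mul_rpow_one_sub_norm_sq α).const_mul _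

theorem integral_norm_prod_cos_term {ι : Type*} [Fintype ι] (a : ι → ℝ) (α : ι → ℕ) :
    ∫ ω : EuclideanSpace ℝ ι,
        ‖(∏ i, (-1) ^ α i * (ω i * a i) ^ (2 * α i) / (2 * α i).factorial) *
          (1 - ‖ω‖ ^ 2) ^ (-(1 : ℝ) / 2)‖ =
      |∫ ω : EuclideanSpace ℝ ι,
        (∏ i, (-1) ^ α i * (ω i * a i) ^ (2 * α i) / (2 * α i).factorial) *
          (1 - ‖ω‖ ^ 2) ^ (-(1 : ℝ) / 2)| := by
  have h (ω : EuclideanSpace ℝ ι) :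
      0 ≤ (∏ i, ω i ^ (2 * α i)) * (1 - ‖ω‖ ^ 2) ^ (-(1 : ℝ) / 2) :=
    mul_nonneg (prod_pow_even_nonneg α _) (rpow_neg_half_nonneg _)
  simp only [prod_cos_term_eq]
  rw [integral_const_mul, abs_mul, abs_of_nonneg (integral_nonneg_of_ae (.of_forall h)),
    ← integral_const_mul]
  refine integral_congr_ae (.of_forall fun ω => ?_)
  simp only [norm_eq_abs]
  rw [abs_mul, abs_of_nonneg (h ω)]

theorem integral_prod_cos_term {m : ℕ} (a : Fin (2 * m) → ℝ) (α : Fin (2 * m) → ℕ) :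
    ∫ ω : EuclideanSpace ℝ (Fin (2 * m)),
        (∏ i, (-1) ^ α i * (ω i * a i) ^ (2 * α i) / (2 * α i).factorial) *
          (1 - ‖ω‖ ^ 2) ^ (-(1 : ℝ) / 2) =
      (2 * π) ^ m / (2 * (∑ i, α i) + 2 * m - 1).doubleFactorial *
        ∏ i, (-(a i ^ 2) / 2) ^ α i / (α i).factorial := by
  simp only [prod_cos_term_eq]
  rw [integral_const_mul, integral_prod_pow_mul_rpow_one_sub_norm_sq,
    show ((∑ i, α i : ℕ) : ℝ) + ((Fintype.card (Fin (2 * m)) : ℝ) + 1) / 2 =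
      ((∑ i, α i) + m : ℕ) + 1 / 2 by rw [Fintype.card_fin]; push_cast; ring,
    Gamma_nat_add_half, mul_add]
  have h : (∏ i, (-(a i ^ 2)) ^ α i / ((2 * α i).factorial : ℝ)) * ∏ i, Gamma (α i + 1 / 2) =
      π ^ m * (∏ i, (-(a i ^ 2) / 2) ^ α i / ((α i).factorial : ℝ)) / 2 ^ (∑ i, α i) := by
    have hp : π ^ m = ∏ _i : Fin (2 * m), √π := by
      rw [Finset.prod_const, Finset.card_univ, Fintype.card_fin, pow_mul, sq_sqrt pi_pos.le]
    rw [hp, ← Finset.prod_pow_eq_pow_sum, ← Finset.prod_mul_distrib, ← Finset.prod_mul_distrib,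
      ← Finset.prod_div_distrib]
    refine Finset.prod_congr rfl fun i _ => ?_
    rw [div_mul_eq_mul_div, mul_div_assoc, Gamma_add_half_div_factorial,
      show (4 : ℝ) = 2 * 2 by norm_num, mul_pow, div_pow]
    field_simp
  have hd : ((2 * (∑ i, α i) + 2 * m - 1).doubleFactorial : ℝ) ≠ 0 := by
    exact_mod_cast (Nat.doubleFactorial_pos _).ne'
  have hπ : √π ≠ 0 := (sqrt_pos.2 pi_pos).ne'
  rw [mul_div_assoc', mul_left_comm, h, pow_add, mul_pow]
  field_simp

theorem summable_abs_integral_prod_cos_term {m : ℕ} (a : Fin (2 * m) → ℝ) :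
    Summable fun α : Fin (2 * m) → ℕ => |(2 * π) ^ m /
      (2 * (∑ i, α i) + 2 * m - 1).doubleFactorial *
        ∏ i, (-(a i ^ 2) / 2) ^ α i / (α i).factorial| := by
  have h := (summable_norm_and_tsum_pi_prod (f := fun i k => (-(a i ^ 2) / 2) ^ k / k.factorial)
    fun i => (summable_pow_div_factorial _).norm).1.mul_left ((2 * π) ^ m)
  refine h.of_nonneg_of_le (fun _ => abs_nonneg _) fun α => ?_
  rw [abs_mul, norm_eq_abs, abs_of_nonneg (by positivity)]
  gcongr
  exact div_le_self (by positivity) (by exact_mod_cast Nat.doubleFactorial_pos _)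

theorem hasSum_integral_prod_cos {m : ℕ} (a : Fin (2 * m) → ℝ) :
    HasSum (fun α : Fin (2 * m) → ℕ =>
        (2 * π) ^ m / (2 * (∑ i, α i) + 2 * m - 1).doubleFactorial *
          ∏ i, (-(a i ^ 2) / 2) ^ α i / (α i).factorial)
      (∫ ω in Metric.closedBall (0 : EuclideanSpace ℝ (Fin (2 * m))) 1,
        (∏ i, cos (ω i * a i)) * (1 - ‖ω‖ ^ 2) ^ (-(1 : ℝ) / 2)) := by
  have h := hasSum_integral_of_summable_integral_norm (integrable_prod_cos_term a) (by
    simpa only [integral_norm_prod_cos_term, integral_prod_cos_term] using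
      summable_abs_integral_prod_cos_term a)
  simp only [integral_prod_cos_term] at h
  rw [setIntegral_eq_integral_of_forall_compl_eq_zero]
  · convert! h using 1
    refine integral_congr_ae (.of_forall fun ω => ?_)
    simp only
    rw [tsum_mul_right, (summable_norm_and_tsum_pi_prod
      (f := fun i k => (-1) ^ k * (ω i * a i) ^ (2 * k) / ((2 * k).factorial : ℝ))
      fun i => (hasSum_cos (ω i * a i)).summable.norm).2]
    simp only [(hasSum_cos _).tsum_eq]
  · intro ω hω
    rw [mem_closedBall_zero_iff, not_le] at hω
    rw [rpow_neg_half_of_nonpos (by nlinarith), mul_zero]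

theorem stmt8 (m : ℕ) (hm : 1 ≤ m) (a : Fin (2*m) → ℝ) (t : ℝ) :
    Summable (fun α : Fin (2*m) → ℕ =>
      |((-1:ℝ) ^ (∑ i, α i) * (2*π)^m * (∏ i, (a i) ^ (2 * α i)) *
          t ^ (2 * (∑ i, α i) + 2*m - 1)) /
        (2 ^ (∑ i, α i) * (∏ i, Nat.factorial (α i)) *
          Nat.doubleFactorial (2 * (∑ i, α i) + 2*m - 1))|) ∧
    t ^ (2*m-1) *
        (∫ ω in Metric.closedBall (0 : EuclideanSpace ℝ (Fin (2*m))) 1,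
          (∏ i, Real.cos (ω i * a i * t)) * (1 - ‖ω‖^2) ^ (-(1:ℝ)/2)) =
      ∑' α : Fin (2*m) → ℕ,
        ((-1:ℝ) ^ (∑ i, α i) * (2*π)^m * (∏ i, (a i) ^ (2 * α i)) *
            t ^ (2 * (∑ i, α i) + 2*m - 1)) /
          (2 ^ (∑ i, α i) * (∏ i, Nat.factorial (α i)) *
            Nat.doubleFactorial (2 * (∑ i, α i) + 2*m - 1)) := by
  have key (α : Fin (2 * m) → ℕ) :
      ((-1:ℝ) ^ (∑ i, α i) * (2*π)^m * (∏ i, (a i) ^ (2 * α i)) *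
            t ^ (2 * (∑ i, α i) + 2*m - 1)) /
          (2 ^ (∑ i, α i) * (∏ i, Nat.factorial (α i)) *
            Nat.doubleFactorial (2 * (∑ i, α i) + 2*m - 1)) =
      t ^ (2 * m - 1) * ((2 * π) ^ m / (2 * (∑ i, α i) + 2 * m - 1).doubleFactorial *
        ∏ i, (-((a i * t) ^ 2) / 2) ^ α i / (α i).factorial) := by
    have h : ∏ i, (-((a i * t) ^ 2) / 2) ^ α i / ((α i).factorial : ℝ) =
        (-1) ^ (∑ i, α i) * (∏ i, (a i) ^ (2 * α i)) * t ^ (2 * ∑ i, α i) /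
          (2 ^ (∑ i, α i) * ∏ i, ((α i).factorial : ℝ)) := by
      rw [pow_mul t, ← Finset.prod_pow_eq_pow_sum, ← Finset.prod_pow_eq_pow_sum,
        ← Finset.prod_pow_eq_pow_sum, ← Finset.prod_mul_distrib, ← Finset.prod_mul_distrib,
        ← Finset.prod_mul_distrib, ← Finset.prod_div_distrib]
      refine Finset.prod_congr rfl fun i _ => ?_
      rw [div_pow, neg_pow, mul_pow, mul_pow, pow_mul]
      field_simp
    rw [h, show t ^ (2 * (∑ i, α i) + 2 * m - 1) = t ^ (2 * ∑ i, α i) * t ^ (2 * m - 1) by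
      rw [← pow_add]; congr 1; omega]
    push_cast
    ring
  have hs := hasSum_integral_prod_cos fun i => a i * t
  simp only [key, mul_assoc (_ : ℝ) (a _) t]
  exact ⟨(hs.summable.mul_left _).abs, (hs.mul_left _).tsum_eq.symm⟩
end
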